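/- arXiv:1310.4618 — 5 statements merged into one kernel-verified Lean document; each statement's English description precedes it below -/
import Mathlib

section
/- For R ∈ ⟨Ric₀⟩ and S, W ∈ ⟨W⟩ in S²_B(⋀²ℝⁿ), one has tri(R, S, W) = 0 = tri(S, R, 𝐈) (where 𝐈 = id ∧ id), and Q(S, R) ∈ ⟨Ric₀⟩. -/
open scoped BigOperators
open Matrix Filter

noncomputable section

/-- `so n`: the Lie algebra of real skew-symmetric `n × n` matrices, as a submodule of
matrices.  It is the model for `⋀²ℝⁿ` under the identification `x ∧ y ↦ x yᵀ - y xᵀ`,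
i.e. `(x ∧ y)(z) = ⟨y,z⟩x - ⟨x,z⟩y`. -/
def so (n : ℕ) : Submodule ℝ (Matrix (Fin n) (Fin n) ℝ) where
  carrier := {A | Aᵀ = -A}
  add_mem' := fun {a b} ha hb => by
    simp only [Set.mem_setOf_eq] at *
    rw [Matrix.transpose_add, ha, hb, neg_add]
  zero_mem' := by simp
  smul_mem' := fun c {a} ha => by
    simp only [Set.mem_setOf_eq] at *
    rw [Matrix.transpose_smul, ha, smul_neg]

lemma mem_so {n : ℕ} {A : Matrix (Fin n) (Fin n) ℝ} : A ∈ so n ↔ Aᵀ = -A := Iff.rfl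

lemma so_skew {n : ℕ} (X : so n) : (X.1)ᵀ = -X.1 := mem_so.mp X.2

lemma so_skew' {n : ℕ} (X : so n) (i j : Fin n) : X.1 j i = -X.1 i j := by
  have h := congrFun (congrFun (so_skew X) i) j
  simpa [Matrix.transpose_apply] using h

/-- The Lie bracket (matrix commutator) on `so n`. -/
def brkt {n : ℕ} (X Y : so n) : so n :=
  ⟨X.1 * Y.1 - Y.1 * X.1, by
    rw [mem_so, Matrix.transpose_sub, Matrix.transpose_mul, Matrix.transpose_mul,
      so_skew X, so_skew Y]
    simp [neg_sub]⟩

/-- The inner product `⟨A, B⟩ = -(1/2) tr (A B)` on `so n ≅ ⋀²ℝⁿ`, for which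
`{e_i ∧ e_j : i < j}` is orthonormal. -/
def ip {n : ℕ} (X Y : so n) : ℝ := -(1 / 2) * (X.1 * Y.1).trace

/-- `ip X` as a linear functional. -/
def ipL {n : ℕ} (X : so n) : so n →ₗ[ℝ] ℝ where
  toFun Y := ip X Y
  map_add' Y Z := by
    simp [ip, Matrix.mul_add, Matrix.trace_add]
    ring
  map_smul' c Y := by
    simp [ip, Matrix.mul_smul, Matrix.trace_smul]
    ring

/-- The wedge `x ∧ y` of two vectors, as an element of `so n`. -/
def wedgeVec {n : ℕ} (x y : Fin n → ℝ) : so n :=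
  ⟨Matrix.of fun i j => x i * y j - y i * x j, by
    rw [mem_so]
    ext i j
    simp [Matrix.transpose_apply]
    ring⟩

/-- Index set for the standard orthonormal basis `{e_i ∧ e_j : i < j}` of `so n`. -/
def pairs (n : ℕ) : Finset (Fin n × Fin n) := Finset.univ.filter (fun p => p.1 < p.2)

/-- Standard basis vector of `ℝⁿ`. -/
def stdVec {n : ℕ} (i : Fin n) : Fin n → ℝ := Pi.single i 1

/-- The standard orthonormal basis element `e_i ∧ e_j` of `so n`. -/
def omegaB {n : ℕ} (p : Fin n × Fin n) : so n := wedgeVec (stdVec p.1) (stdVec p.2)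

/-- Hamilton's sharp product `A # B` of self-adjoint endomorphisms of `⋀²ℝⁿ ≅ so n`:
`⟨(A # B)(φ), ψ⟩ = (1/2) Σ_{α,β} ⟨[A ω_α, B ω_β], φ⟩ ⟨[ω_α, ω_β], ψ⟩`
over the orthonormal basis `{ω_α} = {e_i ∧ e_j : i < j}`. -/
def sharp {n : ℕ} (A B : Module.End ℝ (so n)) : Module.End ℝ (so n) :=
  (1 / 2 : ℝ) • ∑ p ∈ pairs n, ∑ q ∈ pairs n,
    (ipL (brkt (A (omegaB p)) (B (omegaB q)))).smulRight (brkt (omegaB p) (omegaB q))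

/-- The bilinear map `Q(A,B) = (1/2)(AB + BA) + A # B`. -/
def Qbil {n : ℕ} (A B : Module.End ℝ (so n)) : Module.End ℝ (so n) :=
  (1 / 2 : ℝ) • (A * B + B * A) + sharp A B

/-- `Q(R) = R² + R # R`. -/
def Qop {n : ℕ} (R : Module.End ℝ (so n)) : Module.End ℝ (so n) := R * R + sharp R R

/-- Self-adjointness of an endomorphism of `so n ≅ ⋀²ℝⁿ`. -/
def IsSelfAdjointCO {n : ℕ} (R : Module.End ℝ (so n)) : Prop :=
  ∀ X Y : so n, ip (R X) Y = ip X (R Y)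

/-- The first Bianchi identity. -/
def SatBianchi {n : ℕ} (R : Module.End ℝ (so n)) : Prop :=
  ∀ x y z w : Fin n → ℝ,
    ip (R (wedgeVec x y)) (wedgeVec z w) + ip (R (wedgeVec y z)) (wedgeVec x w)
      + ip (R (wedgeVec z x)) (wedgeVec y w) = 0

/-- Algebraic curvature operators: self-adjoint endomorphisms of `⋀²ℝⁿ` satisfying the
first Bianchi identity.  `IsACO R` says `R ∈ S²_B(⋀²ℝⁿ)`. -/
def IsACO {n : ℕ} (R : Module.End ℝ (so n)) : Prop := IsSelfAdjointCO R ∧ SatBianchi R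

/-- The Ricci tensor of `R`, `Ric(R)_{ij} = Σ_k ⟨R(e_i ∧ e_k), e_j ∧ e_k⟩`. -/
def RicM {n : ℕ} (R : Module.End ℝ (so n)) : Matrix (Fin n) (Fin n) ℝ :=
  Matrix.of fun i j => ∑ k, ip (R (wedgeVec (stdVec i) (stdVec k))) (wedgeVec (stdVec j) (stdVec k))

/-- The scalar curvature `s(R) = tr Ric(R)`. -/
def scal {n : ℕ} (R : Module.End ℝ (so n)) : ℝ := (RicM R).trace

/-- `‖Ric(R)‖² = tr (Ric(R)²)`. -/
def ricNormSq {n : ℕ} (R : Module.End ℝ (so n)) : ℝ := (RicM R * RicM R).trace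

/-- The traceless Ricci tensor `Ric₀(R)`. -/
def Ric0M {n : ℕ} (R : Module.End ℝ (so n)) : Matrix (Fin n) (Fin n) ℝ :=
  RicM R - (scal R / n) • (1 : Matrix (Fin n) (Fin n) ℝ)

/-- `R` is Einstein if `Ric(R)` is a scalar multiple of the identity of `ℝⁿ`. -/
def IsEinstein {n : ℕ} (R : Module.End ℝ (so n)) : Prop :=
  ∃ c : ℝ, RicM R = c • (1 : Matrix (Fin n) (Fin n) ℝ)

lemma wedgeEnd_key {n : ℕ} (A B : Matrix (Fin n) (Fin n) ℝ) (M : so n) :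
    (A * M.1 * Bᵀ + B * M.1 * Aᵀ)ᵀ = -(A * M.1 * Bᵀ + B * M.1 * Aᵀ) := by
  have hM := so_skew M
  rw [Matrix.transpose_add, Matrix.transpose_mul, Matrix.transpose_mul,
    Matrix.transpose_mul, Matrix.transpose_mul, Matrix.transpose_transpose,
    Matrix.transpose_transpose, hM]
  simp only [Matrix.mul_neg, Matrix.neg_mul, Matrix.mul_assoc, neg_add]
  abel

/-- The wedge `A ∧ B` of two endomorphisms of `ℝⁿ`, as an endomorphism of `⋀²ℝⁿ ≅ so n`:
`(A ∧ B)(v ∧ w) = (1/2)(Av ∧ Bw + Bv ∧ Aw)`, i.e. `M ↦ (1/2)(A M Bᵀ + B M Aᵀ)`. -/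
def wedgeEnd {n : ℕ} (A B : Matrix (Fin n) (Fin n) ℝ) : Module.End ℝ (so n) where
  toFun M := ⟨(1 / 2 : ℝ) • (A * M.1 * Bᵀ + B * M.1 * Aᵀ), by
    rw [mem_so, Matrix.transpose_smul, wedgeEnd_key, smul_neg]⟩
  map_add' M N := by
    apply Subtype.ext
    simp [Matrix.mul_add, Matrix.add_mul, smul_add]
    abel
  map_smul' c M := by
    apply Subtype.ext
    simp [Matrix.mul_smul, Matrix.smul_mul, smul_smul, mul_comm]

/-- Inner product `⟨A, B⟩ = tr(A ∘ B)` on endomorphisms of `⋀²ℝⁿ` (the Frobenius inner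
product for self-adjoint operators). -/
def endIP {n : ℕ} (A B : Module.End ℝ (so n)) : ℝ := LinearMap.trace ℝ ↥(so n) (A * B)

/-- Norm of an endomorphism of `⋀²ℝⁿ` induced by `endIP`. -/
def endNorm {n : ℕ} (A : Module.End ℝ (so n)) : ℝ := Real.sqrt (endIP A A)

/-- Huisken's trilinear form `tri(A,B,C) = tr((AB + BA + 2 A#B) ∘ C) = 2⟨Q(A,B), C⟩`. -/
def tri {n : ℕ} (A B C : Module.End ℝ (so n)) : ℝ :=
  LinearMap.trace ℝ ↥(so n) ((A * B + B * A + (2 : ℝ) • sharp A B) * C)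

/-- The identity component `R_I = (s(R)/(n(n-1))) id ∧ id` of a curvature operator. -/
def compI {n : ℕ} (R : Module.End ℝ (so n)) : Module.End ℝ (so n) :=
  (scal R / ((n : ℝ) * ((n : ℝ) - 1))) • 1

/-- The traceless-Ricci component `R_{Ric₀} = (2/(n-2)) Ric₀(R) ∧ id`. -/
def compRic0 {n : ℕ} (R : Module.End ℝ (so n)) : Module.End ℝ (so n) :=
  (2 / ((n : ℝ) - 2)) • wedgeEnd (Ric0M R) 1

/-- The Weyl component `R_W = R - R_I - R_{Ric₀}`. -/
def compW {n : ℕ} (R : Module.End ℝ (so n)) : Module.End ℝ (so n) := R - compI R - compRic0 R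

/-- The derivative `DQ̃(R)` of the normalized vector field
`Q̃(R) = Q(R) - ‖Ric R‖² R` at `R`, applied to `A`:
`DQ̃(R)(A) = 2Q(R,A) - ‖Ric R‖² A - 2 tr(Ric R · Ric A) R`. -/
def DQt {n : ℕ} (R A : Module.End ℝ (so n)) : Module.End ℝ (so n) :=
  (2 : ℝ) • Qbil R A - ricNormSq R • A - (2 * (RicM R * RicM A).trace) • R


lemma omegaB_apply {n : ℕ} (p q i j : Fin n) :
    (omegaB (p, q)).1 i j =
      (if i = p then 1 else 0) * (if j = q then 1 else 0)
        - (if i = q then 1 else 0) * (if j = p then (1 : ℝ) else 0) := by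
  simp [omegaB, wedgeVec, stdVec, Pi.single_apply]

lemma omegaB_swap {n : ℕ} (p q : Fin n) : omegaB (q, p) = - omegaB (p, q) := by
  apply Subtype.ext
  ext i j
  rw [Submodule.coe_neg, Matrix.neg_apply, omegaB_apply, omegaB_apply]
  ring

lemma omegaB_diag {n : ℕ} (p : Fin n) : omegaB (p, p) = 0 := by
  apply Subtype.ext
  ext i j
  rw [omegaB_apply]
  simp

lemma ip_omegaB {n : ℕ} (X : so n) (p q : Fin n) : ip X (omegaB (p, q)) = X.1 p q := by
  have h : ip X (omegaB (p, q)) = -(1 / 2) * (X.1 q p - X.1 p q) := by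
    unfold ip
    congr 1
    simp only [Matrix.trace, Matrix.diag, Matrix.mul_apply, omegaB_apply, mul_sub,
      Finset.sum_sub_distrib]
    simp
  rw [h, so_skew' X p q]
  ring

lemma ip_symm {n : ℕ} (X Y : so n) : ip X Y = ip Y X := by
  unfold ip
  rw [Matrix.trace_mul_comm]

lemma sum_pairs {n : ℕ} {M : Type*} [AddCommGroup M] [Module ℝ M] (f : Fin n × Fin n → M)
    (hsymm : ∀ p q, f (q, p) = f (p, q)) (hd : ∀ p, f (p, p) = 0) :
    ∑ p ∈ pairs n, f p = (1 / 2 : ℝ) • ∑ p, ∑ q, f (p, q) := by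
  have h1 : ∑ p ∈ pairs n, f p = ∑ p : Fin n, ∑ q : Fin n, if p < q then f (p, q) else 0 := by
    rw [pairs, Finset.sum_filter, Fintype.sum_prod_type]
  have h2 : ∑ p : Fin n, ∑ q : Fin n, f (p, q)
      = (∑ p : Fin n, ∑ q : Fin n, if p < q then f (p, q) else 0)
        + ∑ p : Fin n, ∑ q : Fin n, if q < p then f (p, q) else 0 := by
    rw [← Finset.sum_add_distrib]
    refine Finset.sum_congr rfl fun p _ => ?_
    rw [← Finset.sum_add_distrib]
    refine Finset.sum_congr rfl fun q _ => ?_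
    rcases lt_trichotomy p q with h | h | h
    · simp [h, h.le]
    · subst h
      simp [hd]
    · simp [h, h.le]
  have h3 : (∑ p : Fin n, ∑ q : Fin n, if q < p then f (p, q) else 0)
      = ∑ p : Fin n, ∑ q : Fin n, if p < q then f (p, q) else 0 := by
    rw [Finset.sum_comm]
    refine Finset.sum_congr rfl fun p _ => Finset.sum_congr rfl fun q _ => ?_
    rw [hsymm p q]
  rw [h1, h2, h3, ← two_smul ℝ, smul_smul]
  norm_num

lemma ipL_apply {n : ℕ} (X Y : so n) : ipL X Y = ip X Y := rfl

lemma ip_neg_right {n : ℕ} (X Y : so n) : ip X (-Y) = - ip X Y := map_neg (ipL X) Y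

lemma ip_zero_right {n : ℕ} (X : so n) : ip X 0 = 0 := map_zero (ipL X)

lemma expand_so {n : ℕ} (X : so n) : ∑ p ∈ pairs n, ip X (omegaB p) • omegaB p = X := by
  rw [sum_pairs]
  · apply Subtype.ext
    ext i j
    simp only [ip_omegaB, Submodule.coe_smul, Submodule.coe_sum, Matrix.smul_apply,
      Matrix.sum_apply, omegaB_apply, smul_eq_mul, mul_sub, Finset.sum_sub_distrib]
    simp
    rw [so_skew' X i j]
    ring
  · intro p q
    rw [omegaB_swap p q, ip_neg_right, smul_neg, neg_smul, neg_neg]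
  · intro p
    rw [omegaB_diag, smul_zero]

lemma apply_entry {n : ℕ} (S : Module.End ℝ (so n)) (X : so n) (k l : Fin n) :
    (S X).1 k l = (1 / 2 : ℝ) * ∑ p, ∑ q, X.1 p q * (S (omegaB (p, q))).1 k l := by
  conv_lhs => rw [← expand_so X]
  rw [sum_pairs]
  · simp [ip_omegaB, Matrix.sum_apply]
  · intro p q
    rw [omegaB_swap p q, ip_neg_right, smul_neg, neg_smul, neg_neg]
  · intro p
    rw [omegaB_diag, smul_zero]

lemma sum_selfadj {n : ℕ} {S : Module.End ℝ (so n)} (hS : IsSelfAdjointCO S) (X : so n) :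
    ∑ p ∈ pairs n, ip (S (omegaB p)) X • omegaB p = S X := by
  conv_rhs => rw [← expand_so (S X)]
  refine Finset.sum_congr rfl fun p _ => ?_
  rw [hS, ip_symm]

lemma ip_brkt {n : ℕ} (X Y Z : so n) : ip (brkt X Y) Z = ip X (brkt Y Z) := by
  unfold ip brkt
  simp only [Matrix.sub_mul, Matrix.mul_sub, Matrix.trace_sub]
  congr 2
  · rw [Matrix.mul_assoc]
  · rw [Matrix.mul_assoc, Matrix.trace_mul_comm, Matrix.mul_assoc]

/-- Bracketing on the right, as a linear map. -/
def brktR {n : ℕ} (Y : so n) : so n →ₗ[ℝ] so n where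
  toFun X := brkt X Y
  map_add' X Z := by
    apply Subtype.ext
    simp [brkt, Matrix.add_mul, Matrix.mul_add]
    abel
  map_smul' c X := by
    apply Subtype.ext
    simp [brkt, smul_sub]

lemma brktR_apply {n : ℕ} (X Y : so n) : brktR Y X = brkt X Y := rfl

lemma brkt_swap {n : ℕ} (X Y : so n) : brkt X Y = - brkt Y X := by
  apply Subtype.ext
  simp [brkt]

lemma sharp_apply {n : ℕ} {S : Module.End ℝ (so n)} (hS : IsSelfAdjointCO S)
    (R : Module.End ℝ (so n)) (X : so n) :
    sharp S R X
      = (1 / 2 : ℝ) • ∑ q ∈ pairs n, brkt (S (brkt (R (omegaB q)) X)) (omegaB q) := by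
  unfold sharp
  rw [LinearMap.smul_apply, Finset.sum_comm, LinearMap.sum_apply]
  congr 1
  refine Finset.sum_congr rfl fun q _ => ?_
  rw [LinearMap.sum_apply, ← brktR_apply, ← sum_selfadj hS, map_sum]
  refine Finset.sum_congr rfl fun p _ => ?_
  rw [LinearMap.smulRight_apply, ipL_apply, ip_brkt, map_smul, brktR_apply]

lemma sharp_comm {n : ℕ} (A B : Module.End ℝ (so n)) : sharp A B = sharp B A := by
  unfold sharp
  rw [Finset.sum_comm]
  congr 1
  refine Finset.sum_congr rfl fun p _ => Finset.sum_congr rfl fun q _ => ?_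
  rw [brkt_swap (A _), brkt_swap (omegaB q)]
  ext1 x
  rw [LinearMap.smulRight_apply, LinearMap.smulRight_apply, ipL_apply, ipL_apply,
    ip_symm, ip_neg_right, ip_symm, smul_neg, neg_smul, neg_neg]

lemma brkt_neg_left {n : ℕ} (X Y : so n) : brkt (-X) Y = - brkt X Y := map_neg (brktR Y) X
lemma brkt_neg_right {n : ℕ} (X Y : so n) : brkt X (-Y) = - brkt X Y := by
  rw [brkt_swap, brkt_neg_left, ← brkt_swap]
lemma brkt_zero_right {n : ℕ} (X : so n) : brkt X 0 = 0 := by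
  rw [brkt_swap, ← brktR_apply, map_zero, neg_zero]

lemma trace_eq {n : ℕ} (E : Module.End ℝ (so n)) :
    LinearMap.trace ℝ (so n) E = (1 / 2 : ℝ) * ∑ p, ∑ q, (E (omegaB (p, q))).1 p q := by
  have h : E = ∑ p ∈ pairs n, (ipL (omegaB p)).smulRight (E (omegaB p)) := by
    ext1 X
    rw [LinearMap.sum_apply]
    conv_lhs => rw [← expand_so X, map_sum]
    refine Finset.sum_congr rfl fun p _ => ?_
    rw [LinearMap.smulRight_apply, ipL_apply, map_smul, ip_symm]
  conv_lhs => rw [h, map_sum]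
  simp only [LinearMap.trace_smulRight, ipL_apply]
  rw [sum_pairs]
  · simp only [ip_symm (omegaB _), ip_omegaB, smul_eq_mul]
  · intro p q
    rw [omegaB_swap p q, map_neg, ip_neg_right, ip_symm, ip_neg_right, ip_symm, neg_neg]
  · intro p
    rw [omegaB_diag, map_zero, ip_zero_right]

lemma RicM_apply {n : ℕ} (R : Module.End ℝ (so n)) (i j : Fin n) :
    RicM R i j = ∑ k, (R (omegaB (i, k))).1 j k := by
  unfold RicM
  rw [Matrix.of_apply]
  exact Finset.sum_congr rfl fun k _ => ip_omegaB _ j k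

lemma wedgeEnd_one_entry {n : ℕ} (A : Matrix (Fin n) (Fin n) ℝ) (X : so n) (i j : Fin n) :
    (wedgeEnd A 1 X).1 i j
      = (1 / 2 : ℝ) * (∑ k, A i k * X.1 k j + ∑ k, X.1 i k * A j k) := by
  simp [wedgeEnd, Matrix.mul_apply]
  ring

lemma trace_wedge {n : ℕ} (B : Matrix (Fin n) (Fin n) ℝ) (W : Module.End ℝ (so n)) :
    LinearMap.trace ℝ (so n) (wedgeEnd B 1 * W)
      = (1 / 2 : ℝ) * ∑ p, ∑ k, B p k * RicM W p k := by
  have h2 : ∑ p, ∑ q, ∑ k, (W (omegaB (p, q))).1 p k * B q k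
      = ∑ p, ∑ k, B p k * RicM W p k := by
    rw [Finset.sum_comm]
    refine Finset.sum_congr rfl fun q _ => ?_
    rw [Finset.sum_comm]
    refine Finset.sum_congr rfl fun k _ => ?_
    rw [RicM_apply, Finset.mul_sum]
    refine Finset.sum_congr rfl fun p _ => ?_
    rw [omegaB_swap q p, map_neg, Submodule.coe_neg, Matrix.neg_apply, so_skew' _ k p]
    ring
  have h1 : ∑ p, ∑ q, ∑ k, B p k * (W (omegaB (p, q))).1 k q
      = ∑ p, ∑ k, B p k * RicM W p k := by
    refine Finset.sum_congr rfl fun p _ => ?_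
    rw [Finset.sum_comm]
    refine Finset.sum_congr rfl fun k _ => ?_
    rw [RicM_apply, Finset.mul_sum]
  rw [trace_eq]
  simp only [Module.End.mul_apply, wedgeEnd_one_entry, ← Finset.mul_sum,
    Finset.sum_add_distrib]
  rw [h1, h2]
  ring

lemma wedgeEnd_omegaB {n : ℕ} (A : Matrix (Fin n) (Fin n) ℝ) (hA : Aᵀ = A) (r s i j : Fin n) :
    (wedgeEnd A 1 (omegaB (r, s))).1 i j = (1 / 2 : ℝ) *
      (A i r * (if j = s then 1 else 0) - A i s * (if j = r then 1 else 0)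
       + (if i = r then 1 else 0) * A s j - (if i = s then 1 else 0) * A r j) := by
  have hA' : ∀ i j, A i j = A j i := fun i j => by
    conv_lhs => rw [← hA, Matrix.transpose_apply]
  rw [wedgeEnd_one_entry]
  simp only [omegaB_apply, mul_sub, sub_mul, Finset.sum_sub_distrib]
  simp [hA' j]
  split_ifs <;> ring

/-- first reduction of the sharp product to entries -/
lemma sharp_entry {n : ℕ} {S : Module.End ℝ (so n)} (hS : IsSelfAdjointCO S)
    (R : Module.End ℝ (so n)) (X : so n) (i j : Fin n) :
    (sharp S R X).1 i j = (1 / 2 : ℝ) *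
      (∑ r, (S (brkt (R (omegaB (r, j))) X)).1 i r
        - ∑ r, (S (brkt (R (omegaB (r, i))) X)).1 j r) := by
  have hneg : ∀ r s, S (brkt (R (omegaB (s, r))) X) = - S (brkt (R (omegaB (r, s))) X) := by
    intro r s
    rw [omegaB_swap r s, map_neg, brkt_neg_left, map_neg]
  rw [sharp_apply hS, sum_pairs]
  · have hb : ∀ r s, (brkt (S (brkt (R (omegaB (r, s))) X)) (omegaB (r, s))).1 i j
        = (S (brkt (R (omegaB (r, s))) X)).1 i r * (if j = s then 1 else 0)
          - (S (brkt (R (omegaB (r, s))) X)).1 i s * (if j = r then 1 else 0)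
          - ((if i = r then 1 else 0) * (S (brkt (R (omegaB (r, s))) X)).1 s j
            - (if i = s then 1 else 0) * (S (brkt (R (omegaB (r, s))) X)).1 r j) := by
      intro r s
      simp only [brkt, Matrix.sub_apply, Matrix.mul_apply, omegaB_apply, mul_sub, sub_mul,
        Finset.sum_sub_distrib]
      simp
    simp only [Submodule.coe_smul, Submodule.coe_sum, Matrix.smul_apply, Matrix.sum_apply,
      smul_eq_mul, hb, Finset.sum_sub_distrib]
    simp
    have e1 : ∑ x, (S (brkt (R (omegaB (j, x))) X)).1 i x
        = - ∑ x, (S (brkt (R (omegaB (x, j))) X)).1 i x := by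
      rw [← Finset.sum_neg_distrib]
      refine Finset.sum_congr rfl fun x _ => ?_
      rw [hneg x j, Submodule.coe_neg, Matrix.neg_apply]
    have e2 : ∑ x, (S (brkt (R (omegaB (i, x))) X)).1 x j
        = ∑ x, (S (brkt (R (omegaB (x, i))) X)).1 j x := by
      refine Finset.sum_congr rfl fun x _ => ?_
      rw [hneg x i, Submodule.coe_neg, Matrix.neg_apply, so_skew' _ j x, neg_neg]
    have e3 : ∑ x, (S (brkt (R (omegaB (x, i))) X)).1 x j
        = - ∑ x, (S (brkt (R (omegaB (x, i))) X)).1 j x := by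
      rw [← Finset.sum_neg_distrib]
      refine Finset.sum_congr rfl fun x _ => ?_
      rw [so_skew' _ j x]
    rw [e1, e2, e3]
    ring
  · intro p q
    rw [hneg, omegaB_swap p q, brkt_neg_left, brkt_neg_right, neg_neg]
  · intro p
    rw [omegaB_diag, brkt_zero_right]

/-- pairing with an antisymmetric tensor -/
lemma sum_antisymm {n : ℕ} (M t : Fin n → Fin n → ℝ) (ht : ∀ p q, t q p = - t p q) :
    ∑ p, ∑ q, M p q * t p q = (1 / 2 : ℝ) * ∑ p, ∑ q, (M p q - M q p) * t p q := by
  have h : ∑ p, ∑ q, M q p * t p q = - ∑ p, ∑ q, M p q * t p q := by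
    rw [Finset.sum_comm, ← Finset.sum_neg_distrib]
    refine Finset.sum_congr rfl fun p _ => ?_
    rw [← Finset.sum_neg_distrib]
    refine Finset.sum_congr rfl fun q _ => ?_
    rw [ht]
    ring
  simp only [sub_mul, Finset.sum_sub_distrib]
  rw [h]
  ring

lemma T_swap {n : ℕ} (S : Module.End ℝ (so n)) (p q k l : Fin n) :
    (S (omegaB (q, p))).1 k l = - (S (omegaB (p, q))).1 k l := by
  rw [omegaB_swap p q, map_neg, Submodule.coe_neg, Matrix.neg_apply]

lemma T_pair {n : ℕ} {S : Module.End ℝ (so n)} (hS : IsSelfAdjointCO S) (p q k l : Fin n) :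
    (S (omegaB (p, q))).1 k l = (S (omegaB (k, l))).1 p q := by
  rw [← ip_omegaB, hS, ip_symm, ip_omegaB]

lemma T_bianchi {n : ℕ} {S : Module.End ℝ (so n)} (hS : SatBianchi S) (p q k l : Fin n) :
    (S (omegaB (p, q))).1 k l + (S (omegaB (q, k))).1 p l + (S (omegaB (k, p))).1 q l = 0 := by
  rw [← ip_omegaB, ← ip_omegaB, ← ip_omegaB]
  exact hS _ _ _ _

/-- evaluation of `S [Y, X]` -/
lemma S_brkt {n : ℕ} (S : Module.End ℝ (so n)) (Y X : so n) (k l : Fin n) :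
    (S (brkt Y X)).1 k l
      = ∑ p, ∑ q, (Y.1 * X.1) p q * (S (omegaB (p, q))).1 k l := by
  rw [sum_antisymm (fun p q => (Y.1 * X.1) p q) (fun p q => (S (omegaB (p, q))).1 k l)
    (fun p q => T_swap S p q k l), apply_entry]
  congr 1
  refine Finset.sum_congr rfl fun p _ => Finset.sum_congr rfl fun q _ => ?_
  congr 1
  rw [← Matrix.transpose_apply (Y.1 * X.1) p q, Matrix.transpose_mul, so_skew, so_skew]
  simp [brkt]

/-- the contraction of `A` with `S` -/
def contr {n : ℕ} (A : Matrix (Fin n) (Fin n) ℝ) (S : Module.End ℝ (so n)) :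
    Matrix (Fin n) (Fin n) ℝ :=
  Matrix.of fun i j => ∑ p, ∑ r, A p r * (S (omegaB (i, p))).1 j r

lemma contr_symm {n : ℕ} (A : Matrix (Fin n) (Fin n) ℝ) (hA : Aᵀ = A)
    {S : Module.End ℝ (so n)} (hS : IsSelfAdjointCO S) (i j : Fin n) :
    contr A S i j = contr A S j i := by
  unfold contr
  rw [Matrix.of_apply, Matrix.of_apply, Finset.sum_comm]
  refine Finset.sum_congr rfl fun p _ => Finset.sum_congr rfl fun q _ => ?_
  rw [T_pair hS]
  conv_lhs => rw [← hA, Matrix.transpose_apply]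

lemma contr_trace {n : ℕ} (A : Matrix (Fin n) (Fin n) ℝ)
    {S : Module.End ℝ (so n)} (hRic : RicM S = 0) : (contr A S).trace = 0 := by
  have h : (contr A S).trace = ∑ p, ∑ r, A p r * RicM S p r := by
    simp only [Matrix.trace, Matrix.diag, contr, Matrix.of_apply]
    rw [Finset.sum_comm]
    refine Finset.sum_congr rfl fun p _ => ?_
    rw [Finset.sum_comm]
    refine Finset.sum_congr rfl fun r _ => ?_
    rw [RicM_apply, Finset.mul_sum]
    refine Finset.sum_congr rfl fun i _ => ?_
    rw [T_swap S p i, so_skew' _ r i]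
    ring
  rw [h, hRic]
  simp

lemma key_G {n : ℕ} (A : Matrix (Fin n) (Fin n) ℝ) (hA : Aᵀ = A)
    {S : Module.End ℝ (so n)} (hS : IsACO S) (hRic : RicM S = 0) (X : so n) (i j : Fin n) :
    ∑ r, (S (brkt (wedgeEnd A 1 (omegaB (r, j))) X)).1 i r
      = (1 / 2 : ℝ) * (- (X.1 * contr A S) j i - ((S X).1 * A) i j
          - ∑ r, ∑ q, (A * X.1) r q * (S (omegaB (j, q))).1 i r) := by
  have hA' : ∀ i j, A i j = A j i := fun i j => by
    conv_lhs => rw [← hA, Matrix.transpose_apply]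
  have hY : ∀ r p q, ((wedgeEnd A 1 (omegaB (r, j))).1 * X.1) p q = (1 / 2 : ℝ) *
      (A p r * X.1 j q - A p j * X.1 r q + (if p = r then (A * X.1) j q else 0)
        - (if p = j then (A * X.1) r q else 0)) := by
    intro r p q
    rw [Matrix.mul_apply]
    simp only [wedgeEnd_omegaB A hA, mul_assoc, ← Finset.mul_sum, add_mul, sub_mul,
      Finset.sum_add_distrib, Finset.sum_sub_distrib]
    simp only [ite_mul, one_mul, zero_mul, Finset.sum_ite_eq', Finset.mem_univ, if_true]
    simp only [Matrix.mul_apply]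
  have t1 : ∑ r, ∑ p, ∑ q, A p r * X.1 j q * (S (omegaB (p, q))).1 i r
      = - (X.1 * contr A S) j i := by
    rw [Matrix.mul_apply, ← Finset.sum_neg_distrib]
    have : ∀ q, -(X.1 j q * contr A S q i)
        = ∑ p, ∑ r, A p r * X.1 j q * (S (omegaB (p, q))).1 i r := by
      intro q
      unfold contr
      rw [Matrix.of_apply, Finset.mul_sum, ← Finset.sum_neg_distrib]
      refine Finset.sum_congr rfl fun p _ => ?_
      rw [Finset.mul_sum, ← Finset.sum_neg_distrib]
      refine Finset.sum_congr rfl fun r _ => ?_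
      rw [T_swap S p q]
      ring
    simp only [this]
    rw [Finset.sum_comm]
    conv_rhs => rw [Finset.sum_comm]
    refine Finset.sum_congr rfl fun p _ => ?_
    rw [Finset.sum_comm]
  have hb : ∀ p, ∑ r, ∑ q, X.1 r q * (S (omegaB (p, q))).1 i r = (S X).1 i p := by
    intro p
    rw [apply_entry]
    have h1 : ∑ r, ∑ q, X.1 r q * (S (omegaB (p, q))).1 i r
        = - ∑ r, ∑ q, X.1 r q * (S (omegaB (p, r))).1 i q := by
      rw [Finset.sum_comm, ← Finset.sum_neg_distrib]
      refine Finset.sum_congr rfl fun r _ => ?_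
      rw [← Finset.sum_neg_distrib]
      refine Finset.sum_congr rfl fun q _ => ?_
      rw [so_skew' X r q]
      ring
    have h2 : ∑ r, ∑ q, X.1 r q * (S (omegaB (p, q))).1 i r
        - ∑ r, ∑ q, X.1 r q * (S (omegaB (p, r))).1 i q
        = ∑ r, ∑ q, X.1 r q * (S (omegaB (r, q))).1 i p := by
      rw [← Finset.sum_sub_distrib]
      refine Finset.sum_congr rfl fun r _ => ?_
      rw [← Finset.sum_sub_distrib]
      refine Finset.sum_congr rfl fun q _ => ?_
      rw [← mul_sub]
      congr 1
      have b := T_bianchi hS.2 p q i r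
      have c1 := T_pair hS.1 p r i q
      have c2 := T_swap S q i p r
      have c3 := T_pair hS.1 r q i p
      have c4 := so_skew' (S (omegaB (i, p))) r q
      linarith
    linarith
  have t2 : ∑ r, ∑ p, ∑ q, A p j * X.1 r q * (S (omegaB (p, q))).1 i r
      = ((S X).1 * A) i j := by
    rw [Matrix.mul_apply, Finset.sum_comm]
    refine Finset.sum_congr rfl fun p _ => ?_
    rw [← hb, Finset.sum_mul]
    refine Finset.sum_congr rfl fun r _ => ?_
    rw [Finset.sum_mul]
    refine Finset.sum_congr rfl fun q _ => ?_
    ring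
  have t3 : ∑ r, ∑ p, ∑ q, (if p = r then (A * X.1) j q else 0) * (S (omegaB (p, q))).1 i r
      = 0 := by
    have : ∀ q, ∑ r, (S (omegaB (r, q))).1 i r = 0 := by
      intro q
      have h := RicM_apply S q i
      rw [hRic, Matrix.zero_apply] at h
      rw [← neg_eq_zero, ← Finset.sum_neg_distrib, h]
      refine Finset.sum_congr rfl fun r _ => ?_
      rw [T_swap S r q]
    have h2 : ∀ r, ∑ p, ∑ q, (if p = r then (A * X.1) j q else 0) * (S (omegaB (p, q))).1 i r
        = ∑ q, (A * X.1) j q * (S (omegaB (r, q))).1 i r := by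
      intro r
      rw [Finset.sum_comm]
      refine Finset.sum_congr rfl fun q _ => ?_
      simp only [ite_mul, zero_mul, Finset.sum_ite_eq', Finset.mem_univ, if_true]
    simp only [h2]
    rw [Finset.sum_comm]
    simp only [← Finset.mul_sum, this, mul_zero, Finset.sum_const_zero]
  have t4 : ∑ r, ∑ p, ∑ q, (if p = j then (A * X.1) r q else 0) * (S (omegaB (p, q))).1 i r
      = ∑ r, ∑ q, (A * X.1) r q * (S (omegaB (j, q))).1 i r := by
    refine Finset.sum_congr rfl fun r _ => ?_
    rw [Finset.sum_comm]
    refine Finset.sum_congr rfl fun q _ => ?_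
    simp only [ite_mul, zero_mul, Finset.sum_ite_eq', Finset.mem_univ, if_true]
  simp only [S_brkt, hY, mul_assoc (1 / 2 : ℝ), ← Finset.mul_sum]
  congr 1
  rw [← t1, ← t2, ← t4]
  conv_lhs => simp only [add_mul, sub_mul, Finset.sum_add_distrib, Finset.sum_sub_distrib]
  rw [t3]
  ring

lemma key_last {n : ℕ} (A : Matrix (Fin n) (Fin n) ℝ) (hA : Aᵀ = A)
    {S : Module.End ℝ (so n)} (hS : IsACO S) (X : so n) (i j : Fin n) :
    ∑ r, ∑ q, (A * X.1) r q * (S (omegaB (j, q))).1 i r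
      - ∑ r, ∑ q, (A * X.1) r q * (S (omegaB (i, q))).1 j r
      = 2 * (S (wedgeEnd A 1 X)).1 i j := by
  have h1 : ∑ r, ∑ q, (A * X.1) r q * (S (omegaB (j, q))).1 i r
      - ∑ r, ∑ q, (A * X.1) r q * (S (omegaB (i, q))).1 j r
      = ∑ r, ∑ q, (A * X.1) r q * (S (omegaB (r, q))).1 i j := by
    rw [← Finset.sum_sub_distrib]
    refine Finset.sum_congr rfl fun r _ => ?_
    rw [← Finset.sum_sub_distrib]
    refine Finset.sum_congr rfl fun q _ => ?_
    rw [← mul_sub]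
    congr 1
    have b := T_bianchi hS.2 j q i r
    have c2 := T_swap S q i j r
    have c3 := T_pair hS.1 r q i j
    have c4 := so_skew' (S (omegaB (i, j))) r q
    linarith
  rw [h1, sum_antisymm (fun p q => (A * X.1) p q) (fun p q => (S (omegaB (p, q))).1 i j)
    (fun p q => T_swap S p q i j), apply_entry, mul_left_comm]
  congr 1
  rw [Finset.mul_sum]
  refine Finset.sum_congr rfl fun r _ => ?_
  rw [Finset.mul_sum]
  refine Finset.sum_congr rfl fun q _ => ?_
  rw [← mul_assoc]
  congr 1
  rw [← Matrix.transpose_apply (A * X.1) r q, Matrix.transpose_mul, so_skew, hA]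
  simp [wedgeEnd, hA]
  ring

lemma Q_eq {n : ℕ} (A : Matrix (Fin n) (Fin n) ℝ) (hA : Aᵀ = A)
    {S : Module.End ℝ (so n)} (hS : IsACO S) (hRic : RicM S = 0) :
    Qbil S (wedgeEnd A 1) = wedgeEnd ((1 / 2 : ℝ) • contr A S) 1 := by
  have hc : (contr A S)ᵀ = contr A S := by
    ext i j
    exact contr_symm A hA hS.1 j i
  ext1 X
  apply Subtype.ext
  ext i j
  have e1 : (wedgeEnd A 1 (S X)).1 i j
      = (1 / 2 : ℝ) * ((A * (S X).1) i j + ((S X).1 * A) i j) := by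
    simp [wedgeEnd, hA]
    ring
  have e2 : (wedgeEnd ((1 / 2 : ℝ) • contr A S) 1 X).1 i j
      = (1 / 4 : ℝ) * ((contr A S * X.1) i j + (X.1 * contr A S) i j) := by
    simp [wedgeEnd, hc]
    ring
  have e3 : (X.1 * contr A S) j i = - (contr A S * X.1) i j := by
    rw [← Matrix.transpose_apply (X.1 * contr A S), Matrix.transpose_mul, so_skew, hc]
    simp
  have e4 : ((S X).1 * A) j i = - (A * (S X).1) i j := by
    rw [← Matrix.transpose_apply ((S X).1 * A), Matrix.transpose_mul, so_skew, hA]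
    simp
  have hQ : (Qbil S (wedgeEnd A 1) X).1 i j
      = (1 / 2 : ℝ) * ((S (wedgeEnd A 1 X)).1 i j + (wedgeEnd A 1 (S X)).1 i j)
        + (sharp S (wedgeEnd A 1) X).1 i j := by
    simp [Qbil]
    ring
  rw [hQ, sharp_entry hS.1, key_G A hA hS hRic, key_G A hA hS hRic, e1, e2, e3, e4]
  have hl := key_last A hA hS X i j
  linarith

lemma tri_eq {n : ℕ} (A B C : Module.End ℝ (so n)) :
    tri A B C = 2 * LinearMap.trace ℝ (so n) (Qbil A B * C) := by
  have h : (A * B + B * A + (2 : ℝ) • sharp A B) = (2 : ℝ) • Qbil A B := by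
    unfold Qbil
    rw [smul_add, smul_smul]
    norm_num
  unfold tri
  rw [h, smul_mul_assoc, map_smul, smul_eq_mul]

lemma Qbil_comm {n : ℕ} (A B : Module.End ℝ (so n)) : Qbil A B = Qbil B A := by
  unfold Qbil
  rw [sharp_comm, add_comm (A * B)]

lemma RicM_one {n : ℕ} (i j : Fin n) :
    RicM (1 : Module.End ℝ (so n)) i j = if i = j then (n : ℝ) - 1 else 0 := by
  rw [RicM_apply]
  simp only [Module.End.one_apply, omegaB_apply, Finset.sum_sub_distrib]
  by_cases h : i = j
  · subst h
    simp
  · simp [h, Ne.symm h]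

/-- For `R ∈ ⟨Ric₀⟩` (i.e. `R = A ∧ id` with `A` traceless
self-adjoint) and Weyl curvature operators `S, W ∈ ⟨W⟩`, one has
`tri(R,S,W) = 0 = tri(S,R,𝐈)` and `Q(S,R) ∈ ⟨Ric₀⟩`. -/
theorem stmt14 (n : ℕ) (A : Matrix (Fin n) (Fin n) ℝ)
    (hAsym : Aᵀ = A) (hAtr : A.trace = 0)
    (R : Module.End ℝ (so n)) (hR : R = wedgeEnd A 1)
    (S W : Module.End ℝ (so n))
    (hS : IsACO S) (hSW : RicM S = 0)
    (hW : IsACO W) (hWW : RicM W = 0) :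
    tri R S W = 0 ∧ tri S R (1 : Module.End ℝ (so n)) = 0 ∧
    ∃ B : Matrix (Fin n) (Fin n) ℝ, Bᵀ = B ∧ B.trace = 0 ∧ Qbil S R = wedgeEnd B 1 := by
  subst hR
  have hQ := Q_eq A hAsym hS hSW
  have htr : ((1 / 2 : ℝ) • contr A S).trace = 0 := by
    rw [Matrix.trace_smul, contr_trace A hSW, smul_zero]
  refine ⟨?_, ?_, (1 / 2 : ℝ) • contr A S, ?_, htr, hQ⟩
  · rw [tri_eq, Qbil_comm, hQ, trace_wedge, hWW]
    simp
  · rw [tri_eq, hQ, trace_wedge]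
    have h : ∑ p, ∑ k, ((1 / 2 : ℝ) • contr A S) p k * RicM (1 : Module.End ℝ (so n)) p k
        = ((1 / 2 : ℝ) • contr A S).trace * ((n : ℝ) - 1) := by
      simp only [RicM_one, mul_ite, mul_zero, Finset.sum_ite_eq, Finset.mem_univ, if_true]
      rw [Matrix.trace, Finset.sum_mul]
      rfl
    rw [h, htr]
    simp
  · ext i j
    rw [Matrix.transpose_apply, Matrix.smul_apply, Matrix.smul_apply,
      contr_symm A hAsym hS.1]
end
end

section
/- If R ∈ S²_B(⋀²ℝⁿ) is an algebraic curvature operator of Ricci type (R_W = 0), then Q(R) = (1/(n−2)) Ric₀(R) ∧ Ric₀(R) + (2s(R)/(n(n−1))) Ric₀(R) ∧ id − (2/(n−2)²) (Ric₀(R)²)₀ ∧ id + (s(R)²/(n²(n−1)) + ‖Ric₀(R)‖²/(n(n−2))) 𝐈, where 𝐈 = id ∧ id and (Ric₀(R)²)₀ is the traceless part of Ric₀(R)². In particular, if R ∈ ⟨Ric₀⟩ (i.e. s(R) = 0 and R_W = 0), then Q(R) = (1/(n−2)) (Ric₀(R) ∧ Ric₀(R))_W − (4/(n−2)²) (Ric₀(R)²)₀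 ∧ id + (‖Ric₀(R)‖²/(n(n−1))) 𝐈. -/
open scoped BigOperators
open Matrix Filter

noncomputable section

section aux

variable {n : ℕ}

lemma aux_wedge_val (i j : Fin n) :
    (wedgeVec (stdVec i) (stdVec j)).1 = Matrix.single i j (1 : ℝ) - Matrix.single j i 1 := by
  ext a b
  simp only [wedgeVec, stdVec, Matrix.of_apply, Matrix.sub_apply, Matrix.single_apply,
    Pi.single_apply]
  grind

lemma aux_omega_val (p : Fin n × Fin n) :
    (omegaB p).1 = Matrix.single p.1 p.2 (1 : ℝ) - Matrix.single p.2 p.1 1 :=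
  aux_wedge_val p.1 p.2

lemma aux_sum_pairs {E : Type*} [AddCommGroup E] [Module ℝ E] (f : Fin n × Fin n → E)
    (hs : ∀ i j, f (i, j) = f (j, i)) (hd : ∀ i, f (i, i) = 0) :
    ∑ p ∈ pairs n, f p = (1 / 2 : ℝ) • ∑ i, ∑ j, f (i, j) := by
  have h1 : ∑ p ∈ pairs n, f p = ∑ i, ∑ j, if i < j then f (i, j) else 0 := by
    rw [pairs, Finset.sum_filter, ← Finset.univ_product_univ, Finset.sum_product]
  have h2 : ∑ p ∈ pairs n, f p = ∑ i, ∑ j, if j < i then f (i, j) else 0 := by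
    rw [h1, Finset.sum_comm]
    refine Finset.sum_congr rfl fun i _ => Finset.sum_congr rfl fun j _ => ?_
    rw [hs]
  have h3 : ∑ i, ∑ j, f (i, j) = ∑ p ∈ pairs n, f p + ∑ p ∈ pairs n, f p := by
    nth_rewrite 1 [h1]
    rw [h2, ← Finset.sum_add_distrib]
    refine Finset.sum_congr rfl fun i _ => ?_
    rw [← Finset.sum_add_distrib]
    refine Finset.sum_congr rfl fun j _ => ?_
    rcases lt_trichotomy i j with h | h | h
    · simp [h, h.not_gt]
    · subst h; simp [hd]
    · simp [h, h.not_gt]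
  rw [h3, ← two_smul ℝ, smul_smul]
  norm_num

lemma aux_ip_omega (p : Fin n × Fin n) (Z : so n) : ip (omegaB p) Z = Z.1 p.1 p.2 := by
  rw [ip, aux_omega_val, Matrix.sub_mul, Matrix.trace_sub, Matrix.trace_single_mul,
    Matrix.trace_single_mul, so_skew' Z p.1 p.2]
  simp; ring

lemma aux_omega_swap (i j : Fin n) : omegaB (j, i) = - omegaB (i, j) := by
  apply Subtype.ext
  simp [aux_omega_val]

lemma aux_omega_diag (i : Fin n) : omegaB (i, i) = 0 := by
  apply Subtype.ext
  simp [aux_omega_val]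

lemma aux_expand (Z : so n) : ∑ p ∈ pairs n, ip (omegaB p) Z • omegaB p = Z := by
  rw [aux_sum_pairs]
  · apply Subtype.ext
    ext a b
    have : ∀ i j : Fin n, ip (omegaB (i, j)) Z = Z.1 i j := fun i j => aux_ip_omega (i, j) Z
    simp only [this, Submodule.coe_smul, Submodule.coe_sum, aux_omega_val, smul_sub,
      Finset.sum_sub_distrib, Matrix.smul_single, Matrix.sub_apply, Matrix.smul_apply,
      Matrix.sum_apply, Matrix.single_apply, ite_and, Finset.sum_ite_eq, Finset.sum_ite_eq',
      Finset.sum_ite_irrel, Finset.sum_const_zero]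
    simp
    rw [so_skew' Z a b]; ring
  · intro i j
    rw [aux_ip_omega, aux_ip_omega, aux_omega_swap i j, so_skew' Z i j]; simp
  · intro i
    simp [aux_omega_diag]

/-- bracket as a linear map in the first slot. -/
def auxBrktL (Y : so n) : so n →ₗ[ℝ] so n where
  toFun X := brkt X Y
  map_add' X X' := by
    apply Subtype.ext
    simp [brkt, Matrix.add_mul, Matrix.mul_add]; abel
  map_smul' c X := by
    apply Subtype.ext
    simp [brkt, smul_sub]

lemma aux_ip_brkt (X Y M : so n) : ip (brkt X Y) M = ip X (brkt Y M) := by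
  simp only [ip, brkt]
  congr 1
  rw [Matrix.sub_mul, Matrix.mul_sub, Matrix.trace_sub, Matrix.trace_sub, ← Matrix.mul_assoc,
    Matrix.mul_assoc Y.1, Matrix.trace_mul_comm Y.1, Matrix.mul_assoc X.1 M.1]

lemma aux_sharp (A B : Module.End ℝ (so n)) (hA : IsSelfAdjointCO A) (M : so n) :
    sharp A B M = (1 / 2 : ℝ) • ∑ q ∈ pairs n, brkt (A (brkt (B (omegaB q)) M)) (omegaB q) := by
  simp only [sharp, LinearMap.smul_apply, LinearMap.sum_apply, LinearMap.smulRight_apply]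
  rw [Finset.sum_comm]
  congr 1
  refine Finset.sum_congr rfl fun q _ => ?_
  have : brkt (A (brkt (B (omegaB q)) M)) (omegaB q)
      = auxBrktL (omegaB q) (A (brkt (B (omegaB q)) M)) := rfl
  rw [this]
  conv_rhs => rw [← aux_expand (A (brkt (B (omegaB q)) M)), map_sum]
  refine Finset.sum_congr rfl fun p _ => ?_
  rw [map_smul]
  show ip _ _ • _ = _ • brkt _ _
  rw [aux_ip_brkt, hA]

lemma aux_sandwich (P : Matrix (Fin n) (Fin n) ℝ) :
    ∑ i, ∑ j, (omegaB (i, j)).1 * P * (omegaB (i, j)).1 =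
      (2 : ℝ) • Pᵀ - (2 * P.trace) • (1 : Matrix (Fin n) (Fin n) ℝ) := by
  simp only [aux_omega_val, Matrix.sub_mul, Matrix.mul_sub, Matrix.single_mul_mul_single,
    Finset.sum_sub_distrib]
  ext a b
  simp only [Matrix.sub_apply,
      Matrix.sum_apply, Matrix.single_apply, ite_and, Finset.sum_ite_eq, Finset.sum_ite_eq',
      Finset.sum_ite_irrel, Finset.sum_const_zero]
  simp [Matrix.one_apply, Matrix.trace]
  split_ifs <;> ring

lemma aux_wedge_one (C : Matrix (Fin n) (Fin n) ℝ) (hC : Cᵀ = C) (X : so n) :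
    (wedgeEnd C 1 X).1 = (1 / 2 : ℝ) • (C * X.1 + X.1 * C) := by
  simp [wedgeEnd, hC]

lemma aux_wedge_sa (C : Matrix (Fin n) (Fin n) ℝ) (hC : Cᵀ = C) :
    IsSelfAdjointCO (wedgeEnd C 1) := by
  intro X Y
  rw [ip, ip, aux_wedge_one C hC, aux_wedge_one C hC]
  simp only [Matrix.smul_mul, Matrix.mul_smul, Matrix.add_mul, Matrix.mul_add,
    Matrix.trace_add, Matrix.trace_smul]
  rw [Matrix.mul_assoc C, Matrix.trace_mul_comm C, Matrix.mul_assoc X.1 Y.1, Matrix.mul_assoc X.1 C]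
  ring_nf

lemma aux_trace_skew (M : so n) : M.1.trace = 0 := by
  have := congrArg Matrix.trace (so_skew M)
  rw [Matrix.trace_transpose, Matrix.trace_neg] at this
  linarith

lemma aux_trace_sym (M : so n) (C : Matrix (Fin n) (Fin n) ℝ) (hC : Cᵀ = C) :
    (C * M.1).trace = 0 := by
  have := Matrix.trace_transpose (C * M.1)
  rw [Matrix.transpose_mul, so_skew M, hC, Matrix.neg_mul, Matrix.trace_neg,
    Matrix.trace_mul_comm] at this
  linarith

lemma aux_brkt_neg (X Y : so n) : brkt (-X) (-Y) = brkt X Y := by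
  apply Subtype.ext; simp [brkt]

lemma aux_brkt_neg_l (X Y : so n) : brkt (-X) Y = - brkt X Y := by
  apply Subtype.ext; simp [brkt]; abel

lemma aux_sharp_val (C : Matrix (Fin n) (Fin n) ℝ) (hC : Cᵀ = C) (M : so n) :
    (sharp (wedgeEnd C 1) (wedgeEnd C 1) M).1 =
      (1 / 4 : ℝ) • (((n : ℝ) - 4) • (C * M.1 * C) + C.trace • (C * M.1 + M.1 * C)
        + (C * C).trace • M.1 - (2 : ℝ) • (C * C * M.1 + M.1 * (C * C))) := by
  rw [aux_sharp _ _ (aux_wedge_sa C hC), aux_sum_pairs]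
  · have h0 := aux_trace_skew M
    have h1 := aux_trace_sym M C hC
    have h1' : (M.1 * C).trace = 0 := by rw [Matrix.trace_mul_comm, h1]
    have h2 : (C * (C * M.1)).trace = 0 := by
      rw [← Matrix.mul_assoc]; exact aux_trace_sym M _ (by rw [Matrix.transpose_mul, hC])
    have h2' : (C * (M.1 * C)).trace = 0 := by
      rw [Matrix.trace_mul_comm, Matrix.mul_assoc, Matrix.trace_mul_comm, Matrix.mul_assoc, h2]
    have key : ∀ i j : Fin n,
        (brkt (wedgeEnd C 1 (brkt (wedgeEnd C 1 (omegaB (i, j))) M)) (omegaB (i, j))).1 =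
        (1 / 4 : ℝ) • (
          C * C * ((omegaB (i, j)).1 * M.1 * (omegaB (i, j)).1)
          + C * ((omegaB (i, j)).1 * (C * M.1) * (omegaB (i, j)).1)
          - C * M.1 * C * ((omegaB (i, j)).1 * 1 * (omegaB (i, j)).1)
          - C * M.1 * ((omegaB (i, j)).1 * C * (omegaB (i, j)).1)
          + C * ((omegaB (i, j)).1 * (M.1 * C) * (omegaB (i, j)).1)
          + (2 : ℝ) • ((omegaB (i, j)).1 * (C * (M.1 * C)) * (omegaB (i, j)).1)
          - M.1 * C * ((omegaB (i, j)).1 * C * (omegaB (i, j)).1)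
          - M.1 * ((omegaB (i, j)).1 * (C * C) * (omegaB (i, j)).1)
          - (omegaB (i, j)).1 * (C * C) * (omegaB (i, j)).1 * M.1
          - (omegaB (i, j)).1 * C * (omegaB (i, j)).1 * (C * M.1)
          + (omegaB (i, j)).1 * (C * M.1) * (omegaB (i, j)).1 * C
          - (omegaB (i, j)).1 * C * (omegaB (i, j)).1 * (M.1 * C)
          - (omegaB (i, j)).1 * 1 * (omegaB (i, j)).1 * (C * M.1 * C)
          + (omegaB (i, j)).1 * (M.1 * C) * (omegaB (i, j)).1 * C
          + (omegaB (i, j)).1 * M.1 * (omegaB (i, j)).1 * (C * C)) := by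
      intro i j
      simp only [brkt, aux_wedge_one C hC]
      generalize (omegaB (i, j)).1 = W
      simp only [Matrix.sub_mul, Matrix.mul_sub, Matrix.add_mul, Matrix.mul_add, Matrix.smul_mul,
        Matrix.mul_smul, Matrix.mul_assoc, Matrix.one_mul]
      module
    simp only [Submodule.coe_smul, Submodule.coe_sum, key]
    simp only [Finset.sum_add_distrib, Finset.sum_sub_distrib, ← Finset.smul_sum,
      ← Finset.mul_sum, ← Finset.sum_mul, aux_sandwich, h0, h1, h1', h2',
      Matrix.transpose_mul, hC, so_skew M, Matrix.trace_one, Fintype.card_fin,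
      Matrix.transpose_one]
    simp only [Matrix.sub_mul, Matrix.mul_sub, Matrix.add_mul, Matrix.mul_add, Matrix.smul_mul,
        Matrix.mul_smul, Matrix.mul_assoc, Matrix.one_mul, Matrix.mul_one, Matrix.mul_neg,
        Matrix.neg_mul]
    module
  · intro i j
    rw [aux_omega_swap i j, map_neg, aux_brkt_neg_l, map_neg, aux_brkt_neg]
  · intro i
    rw [aux_omega_diag]
    apply Subtype.ext; simp [brkt]

lemma aux_ric0_trace (hn : 3 ≤ n) (R : Module.End ℝ (so n)) : (Ric0M R).trace = 0 := by
  have : (n : ℝ) ≠ 0 := by positivity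
  simp [Ric0M, scal, Matrix.trace_sub, Matrix.trace_smul, this]

lemma aux_ip_comm (X Y : so n) : ip X Y = ip Y X := by
  rw [ip, ip, Matrix.trace_mul_comm]

lemma aux_ric0_symm (R : Module.End ℝ (so n)) (hR : IsSelfAdjointCO R) :
    (Ric0M R)ᵀ = Ric0M R := by
  have : (RicM R)ᵀ = RicM R := by
    ext i j
    simp only [RicM, Matrix.transpose_apply, Matrix.of_apply]
    refine Finset.sum_congr rfl fun k _ => ?_
    rw [hR, aux_ip_comm]
  simp [Ric0M, this]

lemma aux_wedge_lin (a b : ℝ) (A : Matrix (Fin n) (Fin n) ℝ) :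
    wedgeEnd (a • 1 + b • A) 1 = a • (1 : Module.End ℝ (so n)) + b • wedgeEnd A 1 := by
  ext1 M
  apply Subtype.ext
  simp [wedgeEnd, Matrix.add_mul, Matrix.mul_add]
  module

lemma aux_ric_wedge (A : Matrix (Fin n) (Fin n) ℝ) (hA : Aᵀ = A) (ht : A.trace = 0) :
    RicM (wedgeEnd A A) = - (A * A) := by
  have hs : ∀ i j, A j i = A i j := fun i j => congrFun (congrFun hA i) j
  ext i j
  have key : ∀ k, ip (wedgeEnd A A (wedgeVec (stdVec i) (stdVec k)))
      (wedgeVec (stdVec j) (stdVec k)) = A i j * A k k - A i k * A k j := by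
    intro k
    have h1 : (wedgeEnd A A (wedgeVec (stdVec i) (stdVec k))).1
        = A * (wedgeVec (stdVec i) (stdVec k)).1 * A := by
      simp only [wedgeEnd, hA, LinearMap.coe_mk, AddHom.coe_mk]
      module
    have h2 := aux_ip_omega (j, k) (wedgeEnd A A (wedgeVec (stdVec i) (stdVec k)))
    rw [aux_ip_comm]
    refine h2.trans ?_
    rw [h1, aux_wedge_val, Matrix.mul_sub, Matrix.sub_mul, Matrix.sub_apply,
      Matrix.mul_assoc, Matrix.mul_assoc]
    simp [Matrix.mul_apply, Matrix.single_apply, ite_and]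
    rw [hs i j, hs k j, hs j k]
    ring
  simp only [RicM, Matrix.of_apply, key, Finset.sum_sub_distrib, ← Finset.mul_sum]
  have : ∑ k, A k k = 0 := ht
  rw [this]
  simp [Matrix.mul_apply]

end aux

/-- If `R ∈ S²_B(⋀²ℝⁿ)` is of Ricci type (`R_W = 0`) then
`Q(R) = (1/(n-2)) Ric₀(R) ∧ Ric₀(R) + (2s(R)/(n(n-1))) Ric₀(R) ∧ id
      - (2/(n-2)²) (Ric₀(R)²)₀ ∧ id + (s(R)²/(n²(n-1)) + ‖Ric₀(R)‖²/(n(n-2))) 𝐈`;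
and if moreover `s(R) = 0` (so `R ∈ ⟨Ric₀⟩`), then
`Q(R) = (1/(n-2)) (Ric₀(R) ∧ Ric₀(R))_W - (4/(n-2)²) (Ric₀(R)²)₀ ∧ id
      + (‖Ric₀(R)‖²/(n(n-1))) 𝐈`. -/
theorem stmt15 (n : ℕ) (hn : 3 ≤ n) (R : Module.End ℝ (so n)) (hACO : IsACO R)
    (hRicciType : compW R = 0) :
    Qop R =
      (1 / ((n : ℝ) - 2)) • wedgeEnd (Ric0M R) (Ric0M R)
      + (2 * scal R / ((n : ℝ) * ((n : ℝ) - 1))) • wedgeEnd (Ric0M R) 1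
      - (2 / ((n : ℝ) - 2) ^ 2) •
          wedgeEnd (Ric0M R * Ric0M R
            - ((Ric0M R * Ric0M R).trace / (n : ℝ)) • (1 : Matrix (Fin n) (Fin n) ℝ)) 1
      + ((scal R) ^ 2 / ((n : ℝ) ^ 2 * ((n : ℝ) - 1))
          + (Ric0M R * Ric0M R).trace / ((n : ℝ) * ((n : ℝ) - 2))) •
          (1 : Module.End ℝ (so n)) ∧
    (scal R = 0 →
      Qop R =
        (1 / ((n : ℝ) - 2)) • compW (wedgeEnd (Ric0M R) (Ric0M R))
        - (4 / ((n : ℝ) - 2) ^ 2) •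
            wedgeEnd (Ric0M R * Ric0M R
              - ((Ric0M R * Ric0M R).trace / (n : ℝ)) • (1 : Matrix (Fin n) (Fin n) ℝ)) 1
        + ((Ric0M R * Ric0M R).trace / ((n : ℝ) * ((n : ℝ) - 1))) •
            (1 : Module.End ℝ (so n))) := by
  have hn3 : (3 : ℝ) ≤ n := by exact_mod_cast hn
  have hn0 : (n : ℝ) ≠ 0 := by linarith
  have hn1 : (n : ℝ) - 1 ≠ 0 := by linarith
  have hn2 : (n : ℝ) - 2 ≠ 0 := by linarith
  have ht := aux_ric0_trace hn R
  have hA := aux_ric0_symm R hACO.1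
  have hR : R = wedgeEnd ((scal R / ((n : ℝ) * ((n : ℝ) - 1))) • 1
      + (2 / ((n : ℝ) - 2)) • Ric0M R) 1 := by
    rw [aux_wedge_lin]
    have h := hRicciType
    ext1 M
    have h' := LinearMap.congr_fun h M
    simp only [compW, compI, compRic0, LinearMap.sub_apply, LinearMap.zero_apply] at h'
    rw [sub_sub, sub_eq_zero] at h'
    exact h'
  generalize Ric0M R = A at *
  generalize scal R = s at *
  have main : Qop R =
      (1 / ((n : ℝ) - 2)) • wedgeEnd A A
      + (2 * s / ((n : ℝ) * ((n : ℝ) - 1))) • wedgeEnd A 1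
      - (2 / ((n : ℝ) - 2) ^ 2) •
          wedgeEnd (A * A
            - ((A * A).trace / (n : ℝ)) • (1 : Matrix (Fin n) (Fin n) ℝ)) 1
      + (s ^ 2 / ((n : ℝ) ^ 2 * ((n : ℝ) - 1))
          + (A * A).trace / ((n : ℝ) * ((n : ℝ) - 2))) •
          (1 : Module.End ℝ (so n)) := by
    have hC : ((s / ((n : ℝ) * ((n : ℝ) - 1))) • (1 : Matrix (Fin n) (Fin n) ℝ)
      + (2 / ((n : ℝ) - 2)) • A)ᵀ = (s / ((n : ℝ) * ((n : ℝ) - 1))) • 1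
      + (2 / ((n : ℝ) - 2)) • A := by simp [hA]
    have hAA : (A * A)ᵀ = A * A := by rw [Matrix.transpose_mul, hA]
    rw [hR, Qop]
    ext1 M
    apply Subtype.ext
    simp only [LinearMap.add_apply, LinearMap.sub_apply, LinearMap.smul_apply,
      Submodule.coe_add, Submodule.coe_sub, Submodule.coe_smul, Module.End.mul_apply,
      aux_sharp_val _ hC, aux_wedge_one _ hC, aux_wedge_one A hA, Module.End.one_apply]
    simp only [wedgeEnd, LinearMap.coe_mk, AddHom.coe_mk, hA, Matrix.transpose_one,
      Matrix.transpose_sub, Matrix.transpose_smul, hAA]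
    simp only [Matrix.add_mul, Matrix.mul_add, Matrix.sub_mul, Matrix.mul_sub, Matrix.smul_mul,
      Matrix.mul_smul, Matrix.one_mul, Matrix.mul_one, Matrix.mul_assoc, Matrix.trace_add,
      Matrix.trace_smul, Matrix.trace_one, ht, Fintype.card_fin, smul_eq_mul]
    generalize (A * A).trace = T
    match_scalars <;> field_simp <;> ring
  refine ⟨main, fun hs => ?_⟩
  rw [main, hs, compW, compI, compRic0, Ric0M, scal, aux_ric_wedge A hA ht]
  ext1 M
  apply Subtype.ext
  have hAA : (A * A)ᵀ = A * A := by rw [Matrix.transpose_mul, hA]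
  simp only [LinearMap.add_apply, LinearMap.sub_apply, LinearMap.smul_apply,
      Submodule.coe_add, Submodule.coe_sub, Submodule.coe_smul, Module.End.one_apply]
  simp only [wedgeEnd, LinearMap.coe_mk, AddHom.coe_mk, hA, Matrix.transpose_one,
      Matrix.transpose_sub, Matrix.transpose_smul, Matrix.transpose_neg, hAA]
  simp only [Matrix.add_mul, Matrix.mul_add, Matrix.sub_mul, Matrix.mul_sub, Matrix.smul_mul,
      Matrix.mul_smul, Matrix.one_mul, Matrix.mul_one, Matrix.mul_assoc, Matrix.neg_mul,
      Matrix.mul_neg, Matrix.trace_neg]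
  generalize (A * A).trace = T
  match_scalars <;> field_simp <;> ring
end
end

section
/- For every algebraic curvature operator R ∈ S²_B(⋀²ℝⁿ) and every orthonormal basis {e_i} of ℝⁿ, the Ricci tensor and scalar curvature of Q(R) are given by ⟨Ric(Q(R))e_i, e_j⟩ = Σ_{k,l} ⟨Ric(R)e_k, e_l⟩·R_{ikjl} and s(Q(R)) = ‖Ric(R)‖², where R_{ikjl} = ⟨R(e_i ∧ e_k), e_j ∧ e_l⟩ and ‖Ric(R)‖² = tr(Ric(R)²). -/
open scoped BigOperators
open Matrix Filter

noncomputable section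

namespace Stmt16Aux

/-- Standard coordinate bivector `e_i ∧ e_j`. -/
def W {n : ℕ} (i j : Fin n) : so n := wedgeVec (stdVec i) (stdVec j)

lemma W_apply {n : ℕ} (i j a b : Fin n) :
    (W i j).1 a b = (if a = i then 1 else 0) * (if b = j then 1 else 0)
      - (if a = j then (1:ℝ) else 0) * (if b = i then 1 else 0) := by
  simp [W, wedgeVec, stdVec, Pi.single_apply]

lemma ip_eq {n : ℕ} (X Y : so n) : ip X Y = 1 / 2 * ∑ a, ∑ b, X.1 a b * Y.1 a b := by
  simp only [ip, Matrix.trace, Matrix.diag, Matrix.mul_apply]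
  rw [neg_mul, ← mul_neg, ← Finset.sum_neg_distrib]
  congr 1
  refine Finset.sum_congr rfl fun a _ => ?_
  rw [← Finset.sum_neg_distrib]
  refine Finset.sum_congr rfl fun b _ => ?_
  rw [so_skew' Y a b]; ring

lemma ip_wedge {n : ℕ} (X : so n) (x y : Fin n → ℝ) :
    ip X (wedgeVec x y) = ∑ a, ∑ b, x a * y b * X.1 a b := by
  rw [ip_eq]
  have h : ∑ a, ∑ b, X.1 a b * (wedgeVec x y).1 a b
      = ∑ a, ∑ b, x a * y b * X.1 a b + ∑ a, ∑ b, x a * y b * X.1 a b := by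
    have hc : ∑ a, ∑ b, x a * y b * X.1 a b = ∑ b, ∑ a, x a * y b * X.1 a b := Finset.sum_comm
    conv_rhs => enter [2]; rw [hc]
    simp only [← Finset.sum_add_distrib]
    refine Finset.sum_congr rfl fun a _ => Finset.sum_congr rfl fun b _ => ?_
    rw [so_skew' X a b]
    simp only [wedgeVec, Matrix.of_apply]
    ring
  rw [h]; ring

lemma ip_W {n : ℕ} (X : so n) (i j : Fin n) : ip X (W i j) = X.1 i j := by
  rw [W, ip_wedge]
  simp [stdVec, Pi.single_apply]

lemma ip_comm {n : ℕ} (X Y : so n) : ip X Y = ip Y X := by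
  rw [ip_eq, ip_eq]; simp only [mul_comm]

lemma W_swap {n : ℕ} (i j : Fin n) : W j i = - W i j := by
  apply Subtype.ext; ext a b
  rw [W_apply, Submodule.coe_neg, Matrix.neg_apply, W_apply]; ring

lemma W_self {n : ℕ} (i : Fin n) : W i i = 0 := by
  apply Subtype.ext; ext a b
  rw [W_apply]; simp

lemma brkt_apply {n : ℕ} (X Y : so n) (i j : Fin n) :
    (brkt X Y).1 i j = ∑ m, (X.1 i m * Y.1 m j - Y.1 i m * X.1 m j) := by
  simp [brkt, Matrix.mul_apply, Finset.sum_sub_distrib]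

/-- Sum over pairs `p < q` contracted with coordinates of `e_p ∧ e_q`. -/
lemma sum_pairs {n : ℕ} (F : so n →ₗ[ℝ] ℝ) (k m : Fin n) :
    ∑ p ∈ pairs n, F (omegaB p) * (omegaB p).1 k m = F (W k m) := by
  have h1 : ∀ p : Fin n × Fin n, omegaB p = W p.1 p.2 := fun p => rfl
  simp only [h1, W_apply]
  rcases lt_trichotomy k m with h | h | h
  · rw [Finset.sum_eq_single (k, m)]
    · simp [h.ne, h.ne']
    · rintro ⟨a, b⟩ hab hne
      have hab : a < b := by simpa [pairs] using hab
      have h1 : ¬ (k = a ∧ m = b) := by rintro ⟨rfl, rfl⟩; exact hne rfl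
      have h2 : ¬ (k = b ∧ m = a) := by rintro ⟨rfl, rfl⟩; exact absurd h hab.asymm
      simp only [← ite_and, mul_ite, mul_one, mul_zero]
      grind
    · intro hh; exact absurd (by simpa [pairs] using h) hh
  · subst h
    rw [W_self, map_zero]
    apply Finset.sum_eq_zero
    intro p _
    ring
  · rw [Finset.sum_eq_single (m, k)]
    · rw [W_swap, map_neg]; simp [h.ne, h.ne']
    · rintro ⟨a, b⟩ hab hne
      have hab : a < b := by simpa [pairs] using hab
      have h1 : ¬ (k = b ∧ m = a) := by rintro ⟨rfl, rfl⟩; exact hne rfl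
      have h2 : ¬ (k = a ∧ m = b) := by rintro ⟨rfl, rfl⟩; exact absurd h hab.asymm
      simp only [← ite_and, mul_ite, mul_one, mul_zero]
      grind
    · intro hh; exact absurd (by simpa [pairs] using h) hh

/-- The entry functional of the bracket as a bilinear map. -/
def brE {n : ℕ} (R : Module.End ℝ (so n)) (i j : Fin n) : so n →ₗ[ℝ] so n →ₗ[ℝ] ℝ :=
  LinearMap.mk₂ ℝ (fun X Y => (brkt (R X) (R Y)).1 i j)
    (by intro X X' Y; simp only [brkt, map_add, Submodule.coe_add, Matrix.sub_apply,
          Matrix.add_mul, Matrix.mul_add, Matrix.add_apply]; ring)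
    (by intro c X Y; simp [brkt]; ring)
    (by intro X X' Y; simp only [brkt, map_add, Submodule.coe_add, Matrix.sub_apply,
          Matrix.add_mul, Matrix.mul_add, Matrix.add_apply]; ring)
    (by intro c X Y; simp [brkt]; ring)

lemma brE_apply {n : ℕ} (R : Module.End ℝ (so n)) (i j : Fin n) (X Y : so n) :
    brE R i j X Y = (brkt (R X) (R Y)).1 i j := rfl

lemma brE_swap {n : ℕ} (R : Module.End ℝ (so n)) (i j : Fin n) (X Y : so n) :
    brE R i j X Y = - brE R i j Y X := by
  simp [brE_apply, brkt]

lemma sum_pairs2 {n : ℕ} (G : so n →ₗ[ℝ] so n →ₗ[ℝ] ℝ) (k m r s : Fin n) :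
    ∑ p ∈ pairs n, ∑ q ∈ pairs n, G (omegaB p) (omegaB q) *
      ((omegaB p).1 k m * (omegaB q).1 r s) = G (W k m) (W r s) := by
  rw [← sum_pairs (G (W k m)) r s]
  rw [Finset.sum_comm]
  refine Finset.sum_congr rfl fun q _ => ?_
  have := sum_pairs (G.flip (omegaB q)) k m
  simp only [LinearMap.flip_apply] at this
  rw [← this, Finset.sum_mul]
  refine Finset.sum_congr rfl fun p _ => ?_
  ring

lemma sharp_apply {n : ℕ} (R : Module.End ℝ (so n)) (i j k l : Fin n) :
    (sharp R R (W i j)).1 k l = ∑ m, brE R i j (W k m) (W m l) := by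
  have h0 : (sharp R R (W i j)).1 k l = (1 / 2) * ∑ p ∈ pairs n, ∑ q ∈ pairs n,
      brE R i j (omegaB p) (omegaB q) * (brkt (omegaB p) (omegaB q)).1 k l := by
    simp only [sharp, LinearMap.smul_apply, LinearMap.sum_apply, LinearMap.smulRight_apply,
      Submodule.coe_smul, Submodule.coe_sum, Matrix.smul_apply, Matrix.sum_apply, smul_eq_mul]
    simp only [ipL, LinearMap.coe_mk, AddHom.coe_mk, ip_W, brE_apply]
  rw [h0]
  have h1 : ∑ p ∈ pairs n, ∑ q ∈ pairs n,
      brE R i j (omegaB p) (omegaB q) * (brkt (omegaB p) (omegaB q)).1 k l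
      = ∑ m, (brE R i j (W k m) (W m l) - brE R i j (W m l) (W k m)) := by
    simp only [brkt_apply, Finset.mul_sum]
    have h2 : ∀ p ∈ pairs n, ∑ q ∈ pairs n, ∑ m, brE R i j (omegaB p) (omegaB q) *
        ((omegaB p).1 k m * (omegaB q).1 m l - (omegaB q).1 k m * (omegaB p).1 m l)
        = ∑ m, ∑ q ∈ pairs n, brE R i j (omegaB p) (omegaB q) *
        ((omegaB p).1 k m * (omegaB q).1 m l - (omegaB q).1 k m * (omegaB p).1 m l) :=
      fun p _ => Finset.sum_comm
    rw [Finset.sum_congr rfl h2, Finset.sum_comm]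
    refine Finset.sum_congr rfl fun m _ => ?_
    rw [← sum_pairs2, ← sum_pairs2]
    simp only [← Finset.sum_sub_distrib]
    refine Finset.sum_congr rfl fun p _ => Finset.sum_congr rfl fun q _ => ?_
    ring
  rw [h1, Finset.mul_sum]
  refine Finset.sum_congr rfl fun m _ => ?_
  rw [brE_swap R i j (W m l)]; ring

section
variable {n : ℕ} (R : Module.End ℝ (so n))

/-- Components of the curvature operator. -/
def T (i j k l : Fin n) : ℝ := (R (W i j)).1 k l

lemma T_a1 (i j k l : Fin n) : T R j i k l = - T R i j k l := by
  simp [T, W_swap i j]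

lemma T_a2 (i j k l : Fin n) : T R i j l k = - T R i j k l := so_skew' _ _ _

lemma T_sym (h : IsACO R) (i j k l : Fin n) : T R i j k l = T R k l i j := by
  simp only [T]
  rw [← ip_W, ← ip_W, h.1, ip_comm]

lemma T_bianchi (h : IsACO R) (i j k l : Fin n) :
    T R i j k l + T R j k i l + T R k i j l = 0 := by
  have := h.2 (stdVec i) (stdVec j) (stdVec k) (stdVec l)
  simp only [T]
  rw [← ip_W, ← ip_W, ← ip_W]
  exact this

lemma Ric_apply (i j : Fin n) : RicM R i j = ∑ k, T R i k j k := by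
  simp only [RicM, Matrix.of_apply, T]
  exact Finset.sum_congr rfl fun k _ => ip_W _ _ _

lemma Ric_symm (h : IsACO R) (i j : Fin n) : RicM R i j = RicM R j i := by
  rw [Ric_apply, Ric_apply]
  exact Finset.sum_congr rfl fun k _ => T_sym R h _ _ _ _

lemma TQ (h : IsACO R) (i j k l : Fin n) : T (Qop R) i j k l =
    1 / 2 * (∑ a, ∑ b, T R i j a b * T R k l a b) +
      ∑ m, ∑ a, (T R k m i a * T R m l a j - T R m l i a * T R k m a j) := by
  have h1 : T (Qop R) i j k l = (R (R (W i j))).1 k l + (sharp R R (W i j)).1 k l := by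
    simp [T, Qop]
  rw [h1, sharp_apply]
  congr 1
  · rw [← ip_W, h.1, ip_eq]; rfl
  · refine Finset.sum_congr rfl fun m _ => ?_
    rw [brE_apply, brkt_apply]; rfl

lemma key (h : IsACO R) (i k : Fin n) :
    ∑ j, ∑ m, ∑ a, T R m j i a * T R k m a j
      = 1 / 2 * ∑ j, ∑ a, ∑ b, T R i j a b * T R k j a b := by
  have h1 : ∑ j, ∑ m, ∑ a, T R m j i a * T R k m a j
      = ∑ m, ∑ a, ∑ j, T R m j i a * T R k m a j := by
    rw [Finset.sum_comm]
    exact Finset.sum_congr rfl fun m _ => Finset.sum_comm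
  have h2 : ∑ m, ∑ a, ∑ j, T R m j i a * T R k m a j
      = ∑ m, ∑ a, ∑ j, T R m a i j * T R k m j a :=
    Finset.sum_congr rfl fun m _ => Finset.sum_comm
  have h3 : ∑ j, ∑ a, ∑ b, T R i j a b * T R k j a b =
      ∑ m, ∑ a, ∑ j, T R m j i a * T R k m a j + ∑ m, ∑ a, ∑ j, T R m a i j * T R k m j a := by
    simp only [← Finset.sum_add_distrib]
    refine Finset.sum_congr rfl fun m _ => Finset.sum_congr rfl fun a _ =>
      Finset.sum_congr rfl fun j _ => ?_
    have e1 := T_a2 R k m a j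
    have e2 : T R i m a j = T R m j i a - T R m a i j := by
      have b := T_bianchi R h m a j i
      have s1 := T_a2 R m a j i
      have s2 := T_a2 R j m a i
      have s3 := T_a1 R j m i a
      have s4 := T_sym R h i m a j
      have s5 := T_a2 R a j i m
      linarith
    rw [e1, e2]; ring
  rw [h1]; rw [h3, ← h2]; ring

lemma RicQ (h : IsACO R) (i k : Fin n) :
    RicM (Qop R) i k = ∑ m, ∑ a, RicM R m a * T R k m i a := by
  rw [Ric_apply]
  simp only [TQ R h, Finset.sum_sub_distrib, Finset.sum_add_distrib]
  rw [key R h, ← Finset.mul_sum]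
  have : ∑ j, ∑ m, ∑ a, T R k m i a * T R m j a j = ∑ m, ∑ a, RicM R m a * T R k m i a := by
    rw [Finset.sum_comm]
    refine Finset.sum_congr rfl fun m _ => ?_
    rw [Finset.sum_comm]
    refine Finset.sum_congr rfl fun a _ => ?_
    rw [Ric_apply, Finset.sum_mul]
    exact Finset.sum_congr rfl fun j _ => mul_comm _ _
  rw [this]; ring

lemma wedge_expand (x y : Fin n → ℝ) : wedgeVec x y = ∑ a, ∑ b, (x a * y b) • W a b := by
  apply Subtype.ext
  ext c d
  simp only [Submodule.coe_sum, Submodule.coe_smul, Matrix.sum_apply, Matrix.smul_apply,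
    smul_eq_mul, W_apply, mul_sub, Finset.sum_sub_distrib]
  simp [wedgeVec, mul_comm]

lemma ip_expand (x y z w : Fin n → ℝ) : ip (R (wedgeVec x y)) (wedgeVec z w)
    = ∑ b, ∑ d, ∑ a, ∑ c, x a * y b * z c * w d * T R a b c d := by
  rw [ip_wedge, wedge_expand]
  simp only [map_sum, map_smul, Submodule.coe_sum, Submodule.coe_smul, Matrix.sum_apply,
    Matrix.smul_apply, smul_eq_mul, Finset.mul_sum]
  have e : ∀ c d a b, z c * w d * (x a * y b * (R (W a b)).1 c d)
    = x a * y b * z c * w d * T R a b c d := by intros; simp only [T]; ring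
  simp only [e]
  simp only [← Fintype.sum_prod_type']
  exact Fintype.sum_equiv
    { toFun := fun p => (p.2.2.2, p.2.1, p.2.2.1, p.1)
      invFun := fun p => (p.2.2.2, p.2.1, p.2.2.1, p.1)
      left_inv := fun _ => rfl
      right_inv := fun _ => rfl } _ _ (fun _ => rfl)

end

end Stmt16Aux


open Stmt16Aux in
/-- For every `R ∈ S²_B(⋀²ℝⁿ)` and every orthonormal basis `{v i}` of
`ℝⁿ`, `⟨Ric(Q(R)) v_i, v_j⟩ = Σ_{k,l} ⟨Ric(R) v_k, v_l⟩ · R_{ikjl}` where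
`R_{ikjl} = ⟨R(v_i ∧ v_k), v_j ∧ v_l⟩`; and `s(Q(R)) = ‖Ric(R)‖² = tr(Ric(R)²)`. -/
theorem stmt16 (n : ℕ) (R : Module.End ℝ (so n)) (hACO : IsACO R)
    (v : Fin n → (Fin n → ℝ))
    (hv : ∀ i j : Fin n, v i ⬝ᵥ v j = if i = j then (1 : ℝ) else 0) :
    (∀ i j : Fin n,
      (RicM (Qop R)).mulVec (v i) ⬝ᵥ v j =
        ∑ k : Fin n, ∑ l : Fin n,
          ((RicM R).mulVec (v k) ⬝ᵥ v l) *
            ip (R (wedgeVec (v i) (v k))) (wedgeVec (v j) (v l))) ∧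
    scal (Qop R) = ricNormSq R := by
  constructor
  · intro i j
    set V : Matrix (Fin n) (Fin n) ℝ := Matrix.of v with hV
    set M : Matrix (Fin n) (Fin n) ℝ :=
      Matrix.of fun b d => ∑ a, ∑ c, v i a * v j c * T R a b c d with hM
    have hVV : V * Vᵀ = 1 := by
      ext a b
      rw [Matrix.mul_apply, Matrix.one_apply, ← hv]
      rfl
    have hVV' : Vᵀ * V = 1 := mul_eq_one_comm.mp hVV
    have e1 : ∀ k l, (RicM R).mulVec (v k) ⬝ᵥ v l = (V * RicM R * Vᵀ) l k := by
      intro k l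
      rw [Matrix.mul_assoc, Matrix.mul_apply, dotProduct]
      refine Finset.sum_congr rfl fun a _ => ?_
      rw [mul_comm, Matrix.mul_apply]
      rfl
    have e2 : ∀ k l, ip (R (wedgeVec (v i) (v k))) (wedgeVec (v j) (v l))
        = (V * M * Vᵀ) k l := by
      intro k l
      rw [ip_expand, Matrix.mul_assoc, Matrix.mul_apply]
      refine Finset.sum_congr rfl fun b _ => ?_
      rw [Matrix.mul_apply, Finset.mul_sum]
      refine Finset.sum_congr rfl fun d _ => ?_
      simp only [hM, hV, Matrix.of_apply, Matrix.transpose_apply, Finset.sum_mul, Finset.mul_sum]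
      refine Finset.sum_congr rfl fun a _ => Finset.sum_congr rfl fun c _ => ?_
      ring
    have e3 : ∑ k : Fin n, ∑ l : Fin n,
          ((RicM R).mulVec (v k) ⬝ᵥ v l) *
            ip (R (wedgeVec (v i) (v k))) (wedgeVec (v j) (v l)) = (RicM R * M).trace := by
      simp only [e1, e2]
      have : ∑ k, ∑ l, (V * RicM R * Vᵀ) l k * (V * M * Vᵀ) k l
          = ((V * RicM R * Vᵀ) * (V * M * Vᵀ)).trace := by
        rw [Finset.sum_comm]
        rfl
      rw [this]
      have h2 : (V * RicM R * Vᵀ) * (V * M * Vᵀ) = V * (RicM R * (Vᵀ * V) * M * Vᵀ) := by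
        simp only [Matrix.mul_assoc]
      rw [h2, hVV', Matrix.trace_mul_comm, Matrix.mul_one, Matrix.mul_assoc, hVV', Matrix.mul_one]
    rw [e3]
    have e4 : (RicM (Qop R)).mulVec (v i) ⬝ᵥ v j
        = ∑ c, ∑ a, ∑ m, ∑ d, v i a * v j c * (RicM R m d * T R a m c d) := by
      simp only [dotProduct, Matrix.mulVec, RicQ R hACO, Finset.sum_mul]
      refine Finset.sum_congr rfl fun c _ => Finset.sum_congr rfl fun a _ =>
        Finset.sum_congr rfl fun m _ => Finset.sum_congr rfl fun d _ => ?_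
      ring
    have e5 : (RicM R * M).trace
        = ∑ m, ∑ d, ∑ c, ∑ a, v i a * v j c * (RicM R m d * T R a m c d) := by
      rw [Matrix.trace_mul_comm]
      simp only [Matrix.trace, Matrix.diag, Matrix.mul_apply, hM, Matrix.of_apply, Finset.sum_mul]
      refine Finset.sum_congr rfl fun m _ => Finset.sum_congr rfl fun d _ => ?_
      rw [Finset.sum_comm]
      refine Finset.sum_congr rfl fun c _ => Finset.sum_congr rfl fun a _ => ?_
      rw [Ric_symm R hACO d m]; ring
    rw [e4, e5]
    simp only [← Fintype.sum_prod_type']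
    exact Fintype.sum_equiv
      { toFun := fun p => (p.2.2.1, p.2.2.2, p.1, p.2.1)
        invFun := fun p => (p.2.2.1, p.2.2.2, p.1, p.2.1)
        left_inv := fun _ => rfl
        right_inv := fun _ => rfl } _ _ (fun _ => rfl)
  · simp only [scal, ricNormSq, Matrix.trace, Matrix.diag, RicQ R hACO, Matrix.mul_apply]
    rw [Finset.sum_comm]
    refine Finset.sum_congr rfl fun m _ => ?_
    rw [Finset.sum_comm]
    refine Finset.sum_congr rfl fun a _ => ?_
    rw [← Finset.mul_sum, Ric_symm R hACO a m]
    congr 1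
    rw [Ric_apply]
    refine Finset.sum_congr rfl fun k _ => ?_
    rw [T_a1, T_a2, neg_neg]
end
end

section
/- Let c > 0 be a real number and let x₁, x₂, x₃ be real numbers satisfying x₁ + x₂ + x₃ = 0 and the system x₁² + c·x₂x₃ = 0, x₂² + c·x₁x₃ = 0, x₃² + c·x₁x₂ = 0. Then x₁ = x₂ = x₃ = 0. -/
/-- If `c > 0` and `x₁ + x₂ + x₃ = 0` with `x₁² + c x₂x₃ = x₂² + c x₁x₃ = x₃² + c x₁x₂ = 0`,
then `x₁ = x₂ = x₃ = 0`.  This is the system satisfied by the eigenvalues of the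
(anti-)self-dual Weyl components of a 4-dimensional algebraic curvature operator `R`
with `Q(R) = R² + R # R = 0`. -/
theorem stmt18 (c x₁ x₂ x₃ : ℝ) (hc : 0 < c)
    (hsum : x₁ + x₂ + x₃ = 0)
    (h1 : x₁ ^ 2 + c * (x₂ * x₃) = 0)
    (h2 : x₂ ^ 2 + c * (x₁ * x₃) = 0)
    (h3 : x₃ ^ 2 + c * (x₁ * x₂) = 0) :
    x₁ = 0 ∧ x₂ = 0 ∧ x₃ = 0 := by
  have hc' : 1 + c ≠ 0 := by positivity
  have e3 : (x₁ - x₂) * x₃ = 0 := by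
    apply (mul_eq_zero.mp (_ : (1 + c) * ((x₁ - x₂) * x₃) = 0)).resolve_left hc'
    linear_combination (x₁ - x₂) * hsum - h1 + h2
  have e1 : (x₂ - x₃) * x₁ = 0 := by
    apply (mul_eq_zero.mp (_ : (1 + c) * ((x₂ - x₃) * x₁) = 0)).resolve_left hc'
    linear_combination (x₂ - x₃) * hsum - h2 + h3
  rcases mul_eq_zero.mp e3 with h | h
  · rcases mul_eq_zero.mp e1 with k | k
    · exact ⟨by linarith, by linarith, by linarith⟩
    · exact ⟨k, by linarith, by linarith⟩
  · subst h
    have a : x₁ = 0 := by simpa using h1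
    exact ⟨a, by linarith, rfl⟩
end

section
/- Let λ₁, λ₂, λ₃ be real numbers satisfying λ₁ + λ₂ + λ₃ = 1/4 and the system λ₁² + 2λ₂λ₃ = (1/4)λ₁, λ₂² + 2λ₁λ₃ = (1/4)λ₂, λ₃² + 2λ₁λ₂ = (1/4)λ₃. Then (λ₁, λ₂, λ₃) is either (1/12, 1/12, 1/12) or a permutation of (0, 0, 1/4). -/
/-- If `λ₁ + λ₂ + λ₃ = 1/4` and `λ_i² + 2λ_jλ_k = (1/4)λ_i` for all cyclic `(i,j,k)`,
then `(λ₁,λ₂,λ₃)` is `(1/12,1/12,1/12)` or a permutation of `(0,0,1/4)`.  This is the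
system satisfied by the eigenvalues of the (anti-)self-dual components of an Einstein
4-dimensional algebraic curvature operator with unit scalar curvature satisfying
`Q(R) = (1/4) R`. -/
theorem stmt19 (l₁ l₂ l₃ : ℝ)
    (hsum : l₁ + l₂ + l₃ = 1 / 4)
    (h1 : l₁ ^ 2 + 2 * (l₂ * l₃) = (1 / 4) * l₁)
    (h2 : l₂ ^ 2 + 2 * (l₁ * l₃) = (1 / 4) * l₂)
    (h3 : l₃ ^ 2 + 2 * (l₁ * l₂) = (1 / 4) * l₃) :
    (l₁ = 1 / 12 ∧ l₂ = 1 / 12 ∧ l₃ = 1 / 12) ∨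
    (l₁ = 0 ∧ l₂ = 0 ∧ l₃ = 1 / 4) ∨
    (l₁ = 0 ∧ l₂ = 1 / 4 ∧ l₃ = 0) ∨
    (l₁ = 1 / 4 ∧ l₂ = 0 ∧ l₃ = 0) := by
  have hc : l₃ = 1 / 4 - l₁ - l₂ := by linarith
  have ha : (l₁ - l₂) * l₃ = 0 := by
    subst hc
    linarith
  have hb : (l₂ - l₃) * l₁ = 0 := by
    subst hc
    linarith
  rcases mul_eq_zero.mp ha with ha | ha <;> rcases mul_eq_zero.mp hb with hb | hb
  · left
    refine ⟨?_, ?_, ?_⟩ <;> linarith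
  · right; left
    refine ⟨?_, ?_, ?_⟩ <;> linarith
  · right; right; right
    refine ⟨?_, ?_, ?_⟩ <;> linarith
  · right; right; left
    refine ⟨?_, ?_, ?_⟩ <;> linarith
end
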